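/- Let (V₁, V₂) be a commuting pair of C₀-semigroups of isometries on a complex Hilbert space H. Then (V₁, V₂) is simultaneously doubly commuting and dual doubly commuting if and only if H decomposes as an orthogonal direct sum H = H_{p,u} ⊕ H_{u,p} ⊕ H_{u,u} of closed subspaces, each reducing both V₁ and V₂, such that: (1) V₁|_{H_{p,u}} is completely nonunitary and V₂|_{H_{p,u}} is a unitary semigroup; (2) V₁|_{H_{u,p}} is a unitary semigroup and V₂|_{H_{u,p}} is completely nonunitary; (3) both V₁|_{H_{u,u}} and V₂|_{H_{u,u}} are unitary semigroups. -/

import Mathlib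

open MeasureTheory ContinuousLinearMap
open scoped ENNReal NNReal InnerProductSpace ComplexInnerProductSpace

noncomputable section

section SemigroupDefs

variable {G : Type} [NormedAddCommGroup G] [InnerProductSpace ℂ G] [CompleteSpace G]

/-- A (C₀-) strongly continuous one-parameter semigroup of bounded operators. -/
def IsC0Semigroup (V : ℝ≥0 → G →L[ℂ] G) : Prop :=
  V 0 = 1 ∧ (∀ s t : ℝ≥0, V (s + t) = V s ∘L V t) ∧ ∀ x : G, Continuous fun t : ℝ≥0 => V t x

/-- A C₀-semigroup of isometries. -/
def IsIsometrySemigroup (V : ℝ≥0 → G →L[ℂ] G) : Prop :=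
  IsC0Semigroup V ∧ ∀ (t : ℝ≥0) (x : G), ‖V t x‖ = ‖x‖

/-- The closed subspace `L` reduces the semigroup `V`: it is invariant under every `V t`
and every `(V t)*`. -/
def ReducedBy (V : ℝ≥0 → G →L[ℂ] G) (L : Submodule ℂ G) : Prop :=
  (∀ t : ℝ≥0, ∀ x ∈ L, V t x ∈ L) ∧ ∀ t : ℝ≥0, ∀ x ∈ L, adjoint (V t) x ∈ L

/-- `T` restricts to a unitary operator on the subspace `L`. -/
def RestrictsToUnitaryOn (T : G →L[ℂ] G) (L : Submodule ℂ G) : Prop :=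
  (∀ x ∈ L, T x ∈ L) ∧ (∀ x ∈ L, ‖T x‖ = ‖x‖) ∧ ∀ y ∈ L, ∃ x ∈ L, T x = y

/-- Every `V t` restricts to a unitary operator on the subspace `L`. -/
def IsUnitarySemigroupOn (V : ℝ≥0 → G →L[ℂ] G) (L : Submodule ℂ G) : Prop :=
  ∀ t : ℝ≥0, RestrictsToUnitaryOn (V t) L

/-- A unitary C₀-semigroup: every `V t` is a surjective isometry. -/
def IsUnitarySemigroup (V : ℝ≥0 → G →L[ℂ] G) : Prop :=
  IsC0Semigroup V ∧ ∀ t : ℝ≥0, (∀ x : G, ‖V t x‖ = ‖x‖) ∧ Function.Surjective (V t)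

/-- `V` is completely nonunitary on the subspace `K`: there is no nonzero closed subspace
of `K` reducing `V` on which every `V t` restricts to a unitary. -/
def IsCnuOn (V : ℝ≥0 → G →L[ℂ] G) (K : Submodule ℂ G) : Prop :=
  ∀ L : Submodule ℂ G, IsClosed (L : Set G) → L ≤ K → ReducedBy V L →
    IsUnitarySemigroupOn V L → L = ⊥

/-- A completely nonunitary semigroup. -/
def IsCnu (V : ℝ≥0 → G →L[ℂ] G) : Prop := IsCnuOn V ⊤

/-- Two semigroups commute. -/
def SgCommute (V1 V2 : ℝ≥0 → G →L[ℂ] G) : Prop :=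
  ∀ t s : ℝ≥0, V1 t ∘L V2 s = V2 s ∘L V1 t

/-- Two semigroups doubly commute. -/
def SgDoublyCommute (V1 V2 : ℝ≥0 → G →L[ℂ] G) : Prop :=
  SgCommute V1 V2 ∧ ∀ t s : ℝ≥0, V1 t ∘L adjoint (V2 s) = adjoint (V2 s) ∘L V1 t

/-- A completely nonunitary pair of semigroups: no nonzero closed subspace reduces both
semigroups in such a way that both restrict to unitary semigroups. -/
def IsCnuPair (V1 V2 : ℝ≥0 → G →L[ℂ] G) : Prop :=
  ∀ L : Submodule ℂ G, IsClosed (L : Set G) → ReducedBy V1 L → ReducedBy V2 L →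
    IsUnitarySemigroupOn V1 L → IsUnitarySemigroupOn V2 L → L = ⊥

/-- A strongly continuous one-parameter unitary group. -/
def IsUnitaryGroup (U : ℝ → G →L[ℂ] G) : Prop :=
  U 0 = 1 ∧ (∀ s t : ℝ, U (s + t) = U s ∘L U t) ∧
  (∀ (t : ℝ) (x : G), ‖U t x‖ = ‖x‖) ∧ (∀ t : ℝ, Function.Surjective (U t)) ∧
  ∀ x : G, Continuous fun t : ℝ => U t x

/-- Two subspaces are mutually orthogonal. -/
def OrthoSubspaces (A B : Submodule ℂ G) : Prop :=
  ∀ x ∈ A, ∀ y ∈ B, ⟪x, y⟫_ℂ = 0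

end SemigroupDefs

/-- The closed first quadrant `ℝ₊² ⊆ ℝ²`. -/
def QQ : Set (ℝ × ℝ) := {p | 0 ≤ p.1 ∧ 0 ≤ p.2}

/-- Lebesgue measure on `ℝ²` restricted to the quadrant `ℝ₊²`; `Lp F 2 nuQ` plays the
role of `L²(ℝ₊², F)`. -/
def nuQ : Measure (ℝ × ℝ) := (volume : Measure (ℝ × ℝ)).restrict QQ

/-- Lebesgue measure on `ℝ²` restricted to `ℝ² ∖ ℝ₊²`; `Lp F 2 nuQc` plays the role of
`L²(ℝ² ∖ ℝ₊², F)`. -/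
def nuQc : Measure (ℝ × ℝ) := (volume : Measure (ℝ × ℝ)).restrict QQᶜ

/-- `(V1, V2)` is a bishift-semigroup: it is jointly unitarily equivalent to the pair
`(𝒮₁^F, 𝒮₂^F)` of shift semigroups on `L²(ℝ₊², F)` for some Hilbert space `F`. -/
def IsBishiftPair {G : Type} [NormedAddCommGroup G] [InnerProductSpace ℂ G] [CompleteSpace G]
    (V1 V2 : ℝ≥0 → G →L[ℂ] G) : Prop :=
  ∃ (F : Type) (_ : NormedAddCommGroup F) (_ : InnerProductSpace ℂ F) (_ : CompleteSpace F)
    (Z : G ≃ₗᵢ[ℂ] Lp F 2 nuQ),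
    ∀ (t : ℝ≥0) (x : G),
      ((Z (V1 t x) : ℝ × ℝ → F) =ᵐ[nuQ]
        fun p => if (t : ℝ) ≤ p.1 then (Z x : ℝ × ℝ → F) (p.1 - (t : ℝ), p.2) else 0) ∧
      ((Z (V2 t x) : ℝ × ℝ → F) =ᵐ[nuQ]
        fun p => if (t : ℝ) ≤ p.2 then (Z x : ℝ × ℝ → F) (p.1, p.2 - (t : ℝ)) else 0)

/-- `(U1, U2)` on the ambient space `G` is a minimal unitary extension of the commuting
pair of semigroups `(V1, V2)` living on the closed subspace `K` of `G`. -/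
def IsMinimalUnitaryExtension {G : Type} [NormedAddCommGroup G] [InnerProductSpace ℂ G]
    [CompleteSpace G] (K : Submodule ℂ G) (V1 V2 : ℝ≥0 → ↥K →L[ℂ] ↥K)
    (U1 U2 : ℝ → G →L[ℂ] G) : Prop :=
  IsUnitaryGroup U1 ∧ IsUnitaryGroup U2 ∧
  (∀ s t : ℝ, U1 s ∘L U2 t = U2 t ∘L U1 s) ∧
  (∀ (t : ℝ≥0) (h : ↥K),
    U1 (t : ℝ) (h : G) = (V1 t h : G) ∧ U2 (t : ℝ) (h : G) = (V2 t h : G)) ∧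
  (Submodule.span ℂ
    {x : G | ∃ (t s : ℝ) (h : ↥K), x = U1 t (U2 s (h : G))}).topologicalClosure = ⊤

/-- The dual pair of `(V1, V2)` (with respect to the minimal unitary extension `(U1, U2)`
of `(V1, V2)` living on `Kᗮ`, given by `Ṽⱼ,t = (Ūⱼ,t)* |_{Kᗮ}`) is doubly commuting:
`Ṽ₁,t Ṽ₂,s = Ṽ₂,s Ṽ₁,t` and `Ṽ₁,t (Ṽ₂,s)* = (Ṽ₂,s)* Ṽ₁,t`.  Here `(Ṽ₂,s)* x`, for
`x ∈ Kᗮ`, is characterised as the unique `w ∈ Kᗮ` with `U2 s x - w ∈ K`. -/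
def DualDoublyCommutes {G : Type} [NormedAddCommGroup G] [InnerProductSpace ℂ G]
    [CompleteSpace G] (K : Submodule ℂ G) (U1 U2 : ℝ → G →L[ℂ] G) : Prop :=
  ∀ t s : ℝ, 0 ≤ t → 0 ≤ s → ∀ x ∈ Kᗮ,
    (adjoint (U1 t) (adjoint (U2 s) x) = adjoint (U2 s) (adjoint (U1 t) x)) ∧
    ∀ w w' : G, w ∈ Kᗮ → U2 s x - w ∈ K → w' ∈ Kᗮ →
      U2 s (adjoint (U1 t) x) - w' ∈ K → adjoint (U1 t) w = w'

/-- The restriction of the semigroup `V` to an invariant subspace `L`. -/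
def SGRestrict {G : Type} [NormedAddCommGroup G] [InnerProductSpace ℂ G]
    (V : ℝ≥0 → G →L[ℂ] G) (L : Submodule ℂ G)
    (hL : ∀ t : ℝ≥0, ∀ x ∈ L, V t x ∈ L) : ℝ≥0 → ↥L →L[ℂ] ↥L := fun t =>
  { toLinearMap := (V t).toLinearMap.restrict (fun x hx => hL t x hx)
    cont := Continuous.subtype_mk ((V t).continuous.comp continuous_subtype_val) _ }

/-- The dual of the pair extended by the unitary groups `(U1, U2)`, i.e. the pair
`(Ṽ₁, Ṽ₂)` on `Kᗮ` given by `Ṽⱼ,t = (Ūⱼ,t)*|_{Kᗮ}`, is a bishift-semigroup: there is a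
unitary `Z : Kᗮ → L²(ℝ₊², F)` carrying `(Ṽ₁, Ṽ₂)` to the pair of shift semigroups. -/
def DualIsBishift {G : Type} [NormedAddCommGroup G] [InnerProductSpace ℂ G]
    [CompleteSpace G] (K : Submodule ℂ G) (U1 U2 : ℝ → G →L[ℂ] G) : Prop :=
  ∃ (F : Type) (_ : NormedAddCommGroup F) (_ : InnerProductSpace ℂ F) (_ : CompleteSpace F)
    (Z : ↥Kᗮ ≃ₗᵢ[ℂ] Lp F 2 nuQ),
    ∀ t : ℝ, 0 ≤ t → ∀ f g : Lp F 2 nuQ,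
      (((g : ℝ × ℝ → F) =ᵐ[nuQ]
          fun p => if t ≤ p.1 then (f : ℝ × ℝ → F) (p.1 - t, p.2) else 0) →
        adjoint (U1 t) (Z.symm f : G) = (Z.symm g : G)) ∧
      (((g : ℝ × ℝ → F) =ᵐ[nuQ]
          fun p => if t ≤ p.2 then (f : ℝ × ℝ → F) (p.1, p.2 - t) else 0) →
        adjoint (U2 t) (Z.symm f : G) = (Z.symm g : G))

/-- `(V1, V2)` is a modified-bishift-semigroup: a completely nonunitary commuting pair of
C₀-semigroups of isometries whose dual (with respect to a minimal unitary extension) is a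
bishift-semigroup. -/
def IsModifiedBishift {G : Type} [NormedAddCommGroup G] [InnerProductSpace ℂ G]
    [CompleteSpace G] (V1 V2 : ℝ≥0 → G →L[ℂ] G) : Prop :=
  IsIsometrySemigroup V1 ∧ IsIsometrySemigroup V2 ∧ SgCommute V1 V2 ∧ IsCnuPair V1 V2 ∧
  ∃ (Ebar : Type) (_ : NormedAddCommGroup Ebar) (_ : InnerProductSpace ℂ Ebar)
    (_ : CompleteSpace Ebar) (J : G →ₗᵢ[ℂ] Ebar) (U1 U2 : ℝ → Ebar →L[ℂ] Ebar),
    IsUnitaryGroup U1 ∧ IsUnitaryGroup U2 ∧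
    (∀ s t : ℝ, U1 s ∘L U2 t = U2 t ∘L U1 s) ∧
    (∀ (t : ℝ≥0) (x : G), U1 (t : ℝ) (J x) = J (V1 t x) ∧ U2 (t : ℝ) (J x) = J (V2 t x)) ∧
    (Submodule.span ℂ
      {y : Ebar | ∃ (t s : ℝ) (x : G), y = U1 t (U2 s (J x))}).topologicalClosure = ⊤ ∧
    DualIsBishift (LinearMap.range J.toLinearMap) U1 U2

/-!
The pair is dual doubly commuting exactly when `ker V₂,s* ⊆ ran V₁,t` for all `t, s`: for `p ∈ K`,
`p ∈ ker V₂,s*` says that `Ū₂,s* p` lies in `Kᗮ` and `p ∈ ran V₁,t` says that `Ū₁,t* p` lies in `K`.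
The unitary part of an isometric semigroup is `⋂ₜ ran Vₜ`. If `V₁` and `V₂` doubly commute, both
unitary parts reduce both semigroups, and the kernel condition says that the complement of each
unitary part lies in the other, so that `H_{p,u}`, `H_{u,p}` and `H_{u,u}` are the two complements
and the intersection.
-/

section Operators

variable {𝕜 E : Type*} [RCLike 𝕜] [NormedAddCommGroup E] [InnerProductSpace 𝕜 E]

theorem orthogonal_eq_of_isOrtho_of_sup_eq_top {A B : Submodule 𝕜 E} (hAB : A ⟂ B)
    (htop : A ⊔ B = ⊤) : Aᗮ = B := calc
  Aᗮ = (B ⊔ A) ⊓ Aᗮ := by rw [sup_comm, htop, top_inf_eq]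
  _ = B ⊔ A ⊓ Aᗮ := sup_inf_assoc_of_le A hAB.ge
  _ = B := by rw [A.inf_orthogonal_eq_bot, sup_bot_eq]

theorem orthogonal_sup_orthogonal_sup_inf_eq_top {A B : Submodule 𝕜 E}
    [A.HasOrthogonalProjection] [B.HasOrthogonalProjection] (hBA : Bᗮ ≤ A) :
    Aᗮ ⊔ Bᗮ ⊔ A ⊓ B = ⊤ := calc
  Aᗮ ⊔ Bᗮ ⊔ A ⊓ B = Aᗮ ⊔ (Bᗮ ⊔ Bᗮᗮ ⊓ A) := by
    rw [sup_assoc, Submodule.orthogonal_orthogonal, inf_comm]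
  _ = Aᗮ ⊔ A := by rw [Submodule.sup_orthogonal_inf_of_hasOrthogonalProjection hBA]
  _ = ⊤ := by rw [sup_comm, Submodule.sup_orthogonal_of_hasOrthogonalProjection]

variable [CompleteSpace E]

theorem adjoint_apply_apply_of_isometry {T : E →L[𝕜] E} (hT : Isometry T) (x : E) :
    adjoint T (T x) = x :=
  congr($(T.isometry_iff_adjoint_comp_self.1 hT) x)

theorem isClosed_range_of_isometry {T : E →L[𝕜] E} (hT : Isometry T) :
    IsClosed (T.range : Set E) :=
  hT.isClosedEmbedding.isClosed_range

theorem apply_adjoint_comm_of_mem_range {S T : E →L[𝕜] E} (hT : Isometry T)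
    (hST : S ∘L T = T ∘L S) {x : E} (hx : x ∈ T.range) :
    S (adjoint T x) = adjoint T (S x) := by
  obtain ⟨y, rfl⟩ := hx
  have hy : S (T y) = T (S y) := congr($hST y)
  simp only [coe_coe, hy, adjoint_apply_apply_of_isometry hT]

theorem apply_adjoint_comm_of_adjoint_apply_mem_range {S T : E →L[𝕜] E} (hS : Isometry S)
    (hST : S ∘L T = T ∘L S) {x : E} (hx : adjoint T (S x) ∈ S.range) :
    S (adjoint T x) = adjoint T (S x) := by
  obtain ⟨y, hy⟩ := hx
  have hST' : adjoint S ∘L adjoint T = adjoint T ∘L adjoint S := by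
    rw [← adjoint_comp, ← adjoint_comp, hST]
  have hyx : y = adjoint T x := calc
    y = adjoint S (adjoint T (S x)) := by rw [← hy, coe_coe, adjoint_apply_apply_of_isometry hS]
    _ = adjoint T (adjoint S (S x)) := congr($hST' (S x))
    _ = adjoint T x := by rw [adjoint_apply_apply_of_isometry hS]
  rw [← hyx]
  exact hy

theorem ker_adjoint_le_range_symm {S T : E →L[𝕜] E} (hT : IsClosed (T.range : Set E))
    (h : (adjoint T).ker ≤ S.range) : (adjoint S).ker ≤ T.range := by
  have := hT.completeSpace_coe
  calc (adjoint S).ker = S.rangeᗮ := S.orthogonal_range.symm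
    _ ≤ (adjoint T).kerᗮ := Submodule.orthogonal_le h
    _ = T.range := by rw [← T.orthogonal_range, Submodule.orthogonal_orthogonal]

theorem mem_unitary_of_norm_map_of_surjective {U : E →L[𝕜] E} (hU : ∀ x, ‖U x‖ = ‖x‖)
    (hsurj : Function.Surjective U) : U ∈ unitary (E →L[𝕜] E) := by
  have hiso : Isometry U := AddMonoidHomClass.isometry_of_norm U hU
  have hunit : IsUnit U := isUnit_iff_bijective.2 ⟨hiso.injective, hsurj⟩
  exact hunit.mem_unitary_iff_star_mul_self.2 (U.isometry_iff_adjoint_comp_self.1 hiso)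

theorem isometry_of_mem_unitary {U : E →L[𝕜] E} (hU : U ∈ unitary (E →L[𝕜] E)) : Isometry U :=
  U.isometry_iff_adjoint_comp_self.2 (Unitary.star_mul_self_of_mem hU)

theorem apply_adjoint_apply_of_mem_unitary {U : E →L[𝕜] E} (hU : U ∈ unitary (E →L[𝕜] E))
    (x : E) : U (adjoint U x) = x :=
  congr($(Unitary.mul_star_self_of_mem hU) x)

theorem apply_adjoint_comm_of_mem_unitary {S U : E →L[𝕜] E} (hU : U ∈ unitary (E →L[𝕜] E))
    (hSU : S ∘L U = U ∘L S) (x : E) : S (adjoint U x) = adjoint U (S x) :=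
  apply_adjoint_comm_of_mem_range (isometry_of_mem_unitary hU) hSU
    ⟨adjoint U x, apply_adjoint_apply_of_mem_unitary hU x⟩

end Operators

section Restriction

variable {𝕜 E : Type*} [RCLike 𝕜] [NormedAddCommGroup E] [InnerProductSpace 𝕜 E]
  {K : Submodule 𝕜 E} {V : K →L[𝕜] K} {U : E →L[𝕜] E}

theorem isometry_of_isometry_of_extends (hUV : ∀ x : K, U x = V x) (hU : Isometry U) :
    Isometry V :=
  AddMonoidHomClass.isometry_of_norm V fun x => calc
    ‖V x‖ = ‖U x‖ := by rw [hUV, Submodule.coe_norm]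
    _ = ‖x‖ := (AddMonoidHomClass.isometry_iff_norm U).1 hU x

theorem comp_comm_of_comp_comm_of_extends {V' : K →L[𝕜] K} {U' : E →L[𝕜] E}
    (hUV : ∀ x : K, U x = V x) (hUV' : ∀ x : K, U' x = V' x) (h : U ∘L U' = U' ∘L U) :
    V ∘L V' = V' ∘L V := by
  ext x
  have hx : U (U' x) = U' (U x) := congr($h x)
  simpa only [hUV, hUV', comp_apply] using hx

variable [CompleteSpace E]

theorem adjoint_apply_mem_orthogonal_of_extends (hUV : ∀ x : K, U x = V x) {x : E}
    (hx : x ∈ Kᗮ) : adjoint U x ∈ Kᗮ := by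
  intro u hu
  rw [adjoint_inner_right, hUV ⟨u, hu⟩]
  exact hx _ (V ⟨u, hu⟩).2

theorem mem_range_iff_adjoint_apply_mem_of_extends (hUV : ∀ x : K, U x = V x)
    (hU : U ∈ unitary (E →L[𝕜] E)) {x : K} : x ∈ V.range ↔ adjoint U x ∈ K := by
  constructor
  · rintro ⟨y, rfl⟩
    rw [coe_coe, ← hUV, adjoint_apply_apply_of_isometry (isometry_of_mem_unitary hU)]
    exact y.2
  · intro hx
    refine ⟨⟨adjoint U x, hx⟩, Subtype.ext ?_⟩
    rw [coe_coe, ← hUV, apply_adjoint_apply_of_mem_unitary hU]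

theorem mem_ker_adjoint_iff_adjoint_apply_mem_orthogonal_of_extends [CompleteSpace K]
    (hUV : ∀ x : K, U x = V x) {x : K} : x ∈ (adjoint V).ker ↔ adjoint U x ∈ Kᗮ := by
  have hinner (y : K) : ⟪(y : E), adjoint U x⟫_𝕜 = ⟪V y, x⟫_𝕜 := by
    rw [adjoint_inner_right, hUV, Submodule.coe_inner]
  rw [← V.orthogonal_range, Submodule.mem_orthogonal, Submodule.mem_orthogonal]
  constructor
  · exact fun h u hu => (hinner ⟨u, hu⟩).trans (h _ ⟨_, rfl⟩)
  · rintro h _ ⟨y, rfl⟩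
    exact (hinner y).symm.trans (h y y.2)

theorem adjoint_apply_eq_of_ker_adjoint_le_range [CompleteSpace K] {V' : K →L[𝕜] K}
    {U' : E →L[𝕜] E} (hUV : ∀ x : K, U x = V x) (hU : U ∈ unitary (E →L[𝕜] E))
    (hUV' : ∀ x : K, U' x = V' x) (hU' : Isometry U') (hcomm : U ∘L U' = U' ∘L U)
    (hker : (adjoint V').ker ≤ V.range) {x w w' : E} (hx : x ∈ Kᗮ) (hw : w ∈ Kᗮ)
    (hp : U' x - w ∈ K) (hw' : w' ∈ Kᗮ) (hp' : U' (adjoint U x) - w' ∈ K) :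
    adjoint U w = w' := by
  obtain ⟨p, hp_eq⟩ : ∃ p : K, (p : E) = U' x - w := ⟨⟨_, hp⟩, rfl⟩
  have hp_ker : p ∈ (adjoint V').ker := by
    rw [mem_ker_adjoint_iff_adjoint_apply_mem_orthogonal_of_extends hUV', hp_eq, map_sub,
      adjoint_apply_apply_of_isometry hU']
    exact sub_mem hx (adjoint_apply_mem_orthogonal_of_extends hUV' hw)
  have hp_mem : adjoint U (p : E) ∈ K :=
    (mem_range_iff_adjoint_apply_mem_of_extends hUV hU).1 (hker hp_ker)
  have hmem : adjoint U w - w' ∈ K := by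
    have := sub_mem hp' hp_mem
    rwa [hp_eq, map_sub, apply_adjoint_comm_of_mem_unitary hU hcomm.symm,
      sub_sub_sub_cancel_left] at this
  have hmem_orthogonal : adjoint U w - w' ∈ Kᗮ :=
    sub_mem (adjoint_apply_mem_orthogonal_of_extends hUV hw) hw'
  exact sub_eq_zero.1 (Submodule.disjoint_def.1 K.orthogonal_disjoint _ hmem hmem_orthogonal)

end Restriction

section Semigroups

variable {G : Type} [NormedAddCommGroup G] [InnerProductSpace ℂ G]
  {V W : ℝ≥0 → G →L[ℂ] G} {L M : Submodule ℂ G}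

/-- The unitary part of a semigroup `V` of isometries, that is, the largest subspace reducing `V`
to a unitary semigroup. It is encoded as the intersection of the ranges of the `V t`. -/
def unitaryPart (V : ℝ≥0 → G →L[ℂ] G) : Submodule ℂ G :=
  ⨅ t, (V t).range

theorem unitaryPart_le_range (V : ℝ≥0 → G →L[ℂ] G) (t : ℝ≥0) : unitaryPart V ≤ (V t).range :=
  iInf_le _ t

theorem IsUnitarySemigroupOn.le_unitaryPart (h : IsUnitarySemigroupOn V L) :
    L ≤ unitaryPart V := by
  refine le_iInf fun t x hx => ?_
  obtain ⟨y, -, hy⟩ := (h t).2.2 x hx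
  exact ⟨y, hy⟩

variable [CompleteSpace G]

theorem ReducedBy.orthogonal (h : ReducedBy V L) : ReducedBy V Lᗮ := by
  refine ⟨fun t x hx u hu => ?_, fun t x hx u hu => ?_⟩
  · rw [← adjoint_inner_left]
    exact hx _ (h.2 t u hu)
  · rw [adjoint_inner_right]
    exact hx _ (h.1 t u hu)

theorem ReducedBy.inf (hL : ReducedBy V L) (hM : ReducedBy V M) : ReducedBy V (L ⊓ M) :=
  ⟨fun t _ hx => ⟨hL.1 t _ hx.1, hM.1 t _ hx.2⟩, fun t _ hx => ⟨hL.2 t _ hx.1, hM.2 t _ hx.2⟩⟩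

theorem SgDoublyCommute.symm (h : SgDoublyCommute V W) : SgDoublyCommute W V := by
  refine ⟨fun t s => (h.1 s t).symm, fun t s => ?_⟩
  simpa only [adjoint_comp, adjoint_adjoint] using congr(adjoint $(h.2 s t))

theorem isClosed_unitaryPart (hV : ∀ t, Isometry (V t)) : IsClosed (unitaryPart V : Set G) := by
  rw [unitaryPart, Submodule.coe_iInf]
  exact isClosed_iInter fun t => isClosed_range_of_isometry (hV t)

theorem reducedBy_unitaryPart (hV : ∀ t, Isometry (V t))
    (hadd : ∀ s t, V (s + t) = V s ∘L V t) : ReducedBy V (unitaryPart V) := by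
  refine ⟨fun r x hx => (Submodule.mem_iInf _).2 fun t => ?_,
    fun r x hx => (Submodule.mem_iInf _).2 fun t => ?_⟩
  · obtain ⟨y, rfl⟩ := unitaryPart_le_range V t hx
    have hcomm : V t ∘L V r = V r ∘L V t := by rw [← hadd, add_comm, hadd]
    exact ⟨V r y, congr($hcomm y)⟩
  · obtain ⟨y, rfl⟩ := unitaryPart_le_range V (r + t) hx
    refine ⟨y, ?_⟩
    rw [coe_coe, hadd, coe_coe, comp_apply, adjoint_apply_apply_of_isometry (hV r)]

theorem SgDoublyCommute.reducedBy_unitaryPart_left (h : SgDoublyCommute V W) :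
    ReducedBy W (unitaryPart V) := by
  refine ⟨fun s x hx => (Submodule.mem_iInf _).2 fun t => ?_,
    fun s x hx => (Submodule.mem_iInf _).2 fun t => ?_⟩ <;>
    obtain ⟨y, rfl⟩ := unitaryPart_le_range V t hx
  · exact ⟨W s y, congr($(h.1 t s) y)⟩
  · exact ⟨adjoint (W s) y, congr($(h.2 t s) y)⟩

theorem ReducedBy.isUnitarySemigroupOn (hL : ReducedBy V L) (hV : ∀ t, Isometry (V t))
    (hle : L ≤ unitaryPart V) : IsUnitarySemigroupOn V L := by
  refine fun t => ⟨hL.1 t, fun x _ => (AddMonoidHomClass.isometry_iff_norm (V t)).1 (hV t) x,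
    fun x hx => ⟨adjoint (V t) x, hL.2 t x hx, ?_⟩⟩
  obtain ⟨y, rfl⟩ := unitaryPart_le_range V t (hle hx)
  rw [coe_coe, adjoint_apply_apply_of_isometry (hV t)]

theorem isCnuOn_orthogonal_unitaryPart (V : ℝ≥0 → G →L[ℂ] G) : IsCnuOn V (unitaryPart V)ᗮ :=
  fun _ _ hle _ hL => eq_bot_iff.2 <|
    (le_inf hL.le_unitaryPart hle).trans (Submodule.inf_orthogonal_eq_bot _).le

theorem orthogonal_unitaryPart_le_unitaryPart (hW : ∀ s, Isometry (W s))
    (hker : ∀ t s, (adjoint (W s)).ker ≤ (V t).range) : (unitaryPart V)ᗮ ≤ unitaryPart W := by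
  refine le_iInf fun s => ?_
  have := (isClosed_range_of_isometry (hW s)).completeSpace_coe
  calc (unitaryPart V)ᗮ ≤ (adjoint (W s)).kerᗮ :=
        Submodule.orthogonal_le (le_iInf fun t => hker t s)
    _ = (W s).range := by rw [← (W s).orthogonal_range, Submodule.orthogonal_orthogonal]

/-- The pair `(V, W)` has an orthogonal decomposition `H = H_{p,u} ⊕ H_{u,p} ⊕ H_{u,u}` into
subspaces reducing both semigroups, with `p` marking a completely nonunitary and `u` a unitary
restriction, of `V` in the first index and of `W` in the second. -/
def HasUnitaryCnuDecomposition (V W : ℝ≥0 → G →L[ℂ] G) : Prop :=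
  ∃ Hpu Hup Huu : Submodule ℂ G,
    (IsClosed (Hpu : Set G) ∧ IsClosed (Hup : Set G) ∧ IsClosed (Huu : Set G)) ∧
    (OrthoSubspaces Hpu Hup ∧ OrthoSubspaces Hpu Huu ∧ OrthoSubspaces Hup Huu) ∧
    Hpu ⊔ Hup ⊔ Huu = ⊤ ∧
    (ReducedBy V Hpu ∧ ReducedBy W Hpu ∧ ReducedBy V Hup ∧ ReducedBy W Hup ∧
      ReducedBy V Huu ∧ ReducedBy W Huu) ∧
    (IsCnuOn V Hpu ∧ IsUnitarySemigroupOn W Hpu) ∧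
    (IsUnitarySemigroupOn V Hup ∧ IsCnuOn W Hup) ∧
    (IsUnitarySemigroupOn V Huu ∧ IsUnitarySemigroupOn W Huu)

theorem SgDoublyCommute.hasUnitaryCnuDecomposition (h : SgDoublyCommute V W)
    (hV : ∀ t, Isometry (V t)) (hVadd : ∀ s t, V (s + t) = V s ∘L V t)
    (hW : ∀ t, Isometry (W t)) (hWadd : ∀ s t, W (s + t) = W s ∘L W t)
    (hker : ∀ t s, (adjoint (W s)).ker ≤ (V t).range) : HasUnitaryCnuDecomposition V W := by
  set X := unitaryPart V
  set Y := unitaryPart W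
  have hXY : Xᗮ ≤ Y := orthogonal_unitaryPart_le_unitaryPart hW hker
  have hYX : Yᗮ ≤ X := orthogonal_unitaryPart_le_unitaryPart hV fun s t =>
    ker_adjoint_le_range_symm (isClosed_range_of_isometry (hW s)) (hker t s)
  have hXc : IsClosed (X : Set G) := isClosed_unitaryPart hV
  have hYc : IsClosed (Y : Set G) := isClosed_unitaryPart hW
  have := hXc.completeSpace_coe
  have := hYc.completeSpace_coe
  have hVX : ReducedBy V X := reducedBy_unitaryPart hV hVadd
  have hWX : ReducedBy W X := h.reducedBy_unitaryPart_left
  have hVY : ReducedBy V Y := h.symm.reducedBy_unitaryPart_left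
  have hWY : ReducedBy W Y := reducedBy_unitaryPart hW hWadd
  refine ⟨Xᗮ, Yᗮ, X ⊓ Y,
    ⟨X.isClosed_orthogonal, Y.isClosed_orthogonal, hXc.inter hYc⟩, ⟨?_, ?_, ?_⟩,
    orthogonal_sup_orthogonal_sup_inf_eq_top hYX,
    ⟨hVX.orthogonal, hWX.orthogonal, hVY.orthogonal, hWY.orthogonal, hVX.inf hVY, hWX.inf hWY⟩,
    ⟨isCnuOn_orthogonal_unitaryPart V, hWX.orthogonal.isUnitarySemigroupOn hW hXY⟩,
    ⟨hVY.orthogonal.isUnitarySemigroupOn hV hYX, isCnuOn_orthogonal_unitaryPart W⟩,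
    (hVX.inf hVY).isUnitarySemigroupOn hV inf_le_left,
    (hWX.inf hWY).isUnitarySemigroupOn hW inf_le_right⟩
  · exact Submodule.isOrtho_iff_inner_eq.1 (X.isOrtho_orthogonal_left.mono_right hYX)
  · exact Submodule.isOrtho_iff_inner_eq.1 (X.isOrtho_orthogonal_left.mono_right inf_le_left)
  · exact Submodule.isOrtho_iff_inner_eq.1 (Y.isOrtho_orthogonal_left.mono_right inf_le_right)

theorem HasUnitaryCnuDecomposition.sgDoublyCommute (h : HasUnitaryCnuDecomposition V W)
    (hV : ∀ t, Isometry (V t)) (hW : ∀ t, Isometry (W t)) (hc : SgCommute V W) :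
    SgDoublyCommute V W := by
  obtain ⟨A, B, C, -, -, htop, ⟨-, -, hVB, hWB, -, -⟩,
    ⟨-, hWA_unitary⟩, ⟨hVB_unitary, -⟩, -, hWC_unitary⟩ := h
  refine ⟨hc, fun t s => ContinuousLinearMap.ext fun x => ?_⟩
  have comm_of_mem {L : Submodule ℂ G} (hL : IsUnitarySemigroupOn W L) {y : G} (hy : y ∈ L) :
      V t (adjoint (W s) y) = adjoint (W s) (V t y) :=
    apply_adjoint_comm_of_mem_range (hW s) (hc t s)
      (unitaryPart_le_range W s (hL.le_unitaryPart hy))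
  have hx : x ∈ A ⊔ B ⊔ C := htop ▸ Submodule.mem_top
  obtain ⟨y, hy, c, hcC, rfl⟩ := Submodule.mem_sup.1 hx
  obtain ⟨a, ha, b, hb, rfl⟩ := Submodule.mem_sup.1 hy
  have hbB : V t (adjoint (W s) b) = adjoint (W s) (V t b) :=
    apply_adjoint_comm_of_adjoint_apply_mem_range (hV t) (hc t s) <|
      unitaryPart_le_range V t (hVB_unitary.le_unitaryPart (hWB.2 s _ (hVB.1 t b hb)))
  simp only [comp_apply, map_add, comm_of_mem hWA_unitary ha, hbB, comm_of_mem hWC_unitary hcC]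

theorem HasUnitaryCnuDecomposition.ker_adjoint_le_range (h : HasUnitaryCnuDecomposition V W)
    (t s : ℝ≥0) : (adjoint (W s)).ker ≤ (V t).range := by
  obtain ⟨A, B, C, -, ⟨hAB, -, hBC⟩, htop, -, ⟨-, hWA_unitary⟩, ⟨hVB, -⟩, -, hWC_unitary⟩ := h
  have hACB : A ⊔ C ⟂ B := Submodule.isOrtho_sup_left.2
    ⟨Submodule.isOrtho_iff_inner_eq.2 hAB, (Submodule.isOrtho_iff_inner_eq.2 hBC).symm⟩
  have hAC : A ⊔ C ≤ (W s).range :=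
    (sup_le hWA_unitary.le_unitaryPart hWC_unitary.le_unitaryPart).trans (unitaryPart_le_range W s)
  calc (adjoint (W s)).ker = (W s).rangeᗮ := (W s).orthogonal_range.symm
    _ ≤ (A ⊔ C)ᗮ := Submodule.orthogonal_le hAC
    _ = B := orthogonal_eq_of_isOrtho_of_sup_eq_top hACB (by rw [sup_right_comm, htop])
    _ ≤ (V t).range := hVB.le_unitaryPart.trans (unitaryPart_le_range V t)

theorem sgDoublyCommute_and_ker_adjoint_le_range_iff
    (hV : ∀ t, Isometry (V t)) (hVadd : ∀ s t, V (s + t) = V s ∘L V t)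
    (hW : ∀ t, Isometry (W t)) (hWadd : ∀ s t, W (s + t) = W s ∘L W t) (hc : SgCommute V W) :
    (SgDoublyCommute V W ∧ ∀ t s, (adjoint (W s)).ker ≤ (V t).range) ↔
      HasUnitaryCnuDecomposition V W :=
  ⟨fun h => h.1.hasUnitaryCnuDecomposition hV hVadd hW hWadd h.2,
    fun h => ⟨h.sgDoublyCommute hV hW hc, h.ker_adjoint_le_range⟩⟩

end Semigroups

section Extensions

variable {G : Type} [NormedAddCommGroup G] [InnerProductSpace ℂ G] [CompleteSpace G]
  {K : Submodule ℂ G} [CompleteSpace K] {V1 V2 : ℝ≥0 → K →L[ℂ] K} {U1 U2 : ℝ → G →L[ℂ] G}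

theorem IsUnitaryGroup.mem_unitary {U : ℝ → G →L[ℂ] G} (hU : IsUnitaryGroup U) (t : ℝ) :
    U t ∈ unitary (G →L[ℂ] G) :=
  mem_unitary_of_norm_map_of_surjective (hU.2.2.1 t) (hU.2.2.2.1 t)

theorem DualDoublyCommutes.ker_adjoint_le_range (h : DualDoublyCommutes K U1 U2)
    (hU1 : ∀ t : ℝ≥0, U1 t ∈ unitary (G →L[ℂ] G)) (hU2 : ∀ t : ℝ≥0, U2 t ∈ unitary (G →L[ℂ] G))
    (hU : ∀ s t : ℝ≥0, U1 s ∘L U2 t = U2 t ∘L U1 s)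
    (hUV1 : ∀ (t : ℝ≥0) (x : K), U1 t x = V1 t x) (hUV2 : ∀ (t : ℝ≥0) (x : K), U2 t x = V2 t x)
    (t s : ℝ≥0) : (adjoint (V2 s)).ker ≤ (V1 t).range := by
  intro p hp
  rw [mem_ker_adjoint_iff_adjoint_apply_mem_orthogonal_of_extends (hUV2 s)] at hp
  rw [mem_range_iff_adjoint_apply_mem_of_extends (hUV1 t) (hU1 t)]
  obtain ⟨k, hk, w, hw, hkw⟩ := K.exists_add_mem_mem_orthogonal (adjoint (U1 t) (p : G))
  have hU2p : U2 s (adjoint (U2 s) (p : G)) = p := apply_adjoint_apply_of_mem_unitary (hU2 s) _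
  have hU1p : U2 s (adjoint (U1 t) (adjoint (U2 s) (p : G))) = adjoint (U1 t) (p : G) := by
    rw [apply_adjoint_comm_of_mem_unitary (hU1 t) (hU t s).symm, hU2p]
  -- `(Ṽ₂,s)*` sends `Ū₂,s* p` to `0` and `Ū₁,t* Ū₂,s* p` to `w`, so dual double commutation
  -- forces `w = 0`.
  have hw0 : adjoint (U1 t) 0 = w :=
    (h t s t.2 s.2 _ hp).2 0 w (zero_mem _) (by rw [hU2p, sub_zero]; exact p.2) hw
      (by rw [hU1p, hkw, add_sub_cancel_right]; exact hk)
  rw [map_zero] at hw0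
  rwa [hkw, ← hw0, add_zero]

theorem dualDoublyCommutes_of_ker_adjoint_le_range
    (hU1 : ∀ t : ℝ≥0, U1 t ∈ unitary (G →L[ℂ] G)) (hU2 : ∀ t : ℝ≥0, Isometry (U2 t))
    (hU : ∀ s t : ℝ≥0, U1 s ∘L U2 t = U2 t ∘L U1 s)
    (hUV1 : ∀ (t : ℝ≥0) (x : K), U1 t x = V1 t x) (hUV2 : ∀ (t : ℝ≥0) (x : K), U2 t x = V2 t x)
    (hker : ∀ t s, (adjoint (V2 s)).ker ≤ (V1 t).range) : DualDoublyCommutes K U1 U2 := by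
  intro t s ht hs x hx
  lift t to ℝ≥0 using ht
  lift s to ℝ≥0 using hs
  have hadj : adjoint (U1 t) ∘L adjoint (U2 s) = adjoint (U2 s) ∘L adjoint (U1 t) := by
    rw [← adjoint_comp, ← adjoint_comp, hU]
  exact ⟨congr($hadj x), fun _ _ => adjoint_apply_eq_of_ker_adjoint_le_range (hUV1 t) (hU1 t)
    (hUV2 s) (hU2 s) (hU t s) (hker t s) hx⟩

theorem dualDoublyCommutes_iff_ker_adjoint_le_range
    (hU1 : ∀ t : ℝ≥0, U1 t ∈ unitary (G →L[ℂ] G)) (hU2 : ∀ t : ℝ≥0, U2 t ∈ unitary (G →L[ℂ] G))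
    (hU : ∀ s t : ℝ≥0, U1 s ∘L U2 t = U2 t ∘L U1 s)
    (hUV1 : ∀ (t : ℝ≥0) (x : K), U1 t x = V1 t x)
    (hUV2 : ∀ (t : ℝ≥0) (x : K), U2 t x = V2 t x) :
    DualDoublyCommutes K U1 U2 ↔ ∀ t s, (adjoint (V2 s)).ker ≤ (V1 t).range :=
  ⟨fun h => h.ker_adjoint_le_range hU1 hU2 hU hUV1 hUV2,
    dualDoublyCommutes_of_ker_adjoint_le_range hU1 (fun t => isometry_of_mem_unitary (hU2 t))
      hU hUV1 hUV2⟩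

theorem doubly_and_dual_doubly_commuting_iff_general
    (hV1 : ∀ s t, V1 (s + t) = V1 s ∘L V1 t) (hV2 : ∀ s t, V2 (s + t) = V2 s ∘L V2 t)
    (hU1 : ∀ t : ℝ≥0, U1 t ∈ unitary (G →L[ℂ] G)) (hU2 : ∀ t : ℝ≥0, U2 t ∈ unitary (G →L[ℂ] G))
    (hU : ∀ s t : ℝ≥0, U1 s ∘L U2 t = U2 t ∘L U1 s)
    (hUV1 : ∀ (t : ℝ≥0) (x : K), U1 t x = V1 t x)
    (hUV2 : ∀ (t : ℝ≥0) (x : K), U2 t x = V2 t x) :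
    (SgDoublyCommute V1 V2 ∧ DualDoublyCommutes K U1 U2) ↔ HasUnitaryCnuDecomposition V1 V2 := by
  rw [dualDoublyCommutes_iff_ker_adjoint_le_range hU1 hU2 hU hUV1 hUV2]
  exact sgDoublyCommute_and_ker_adjoint_le_range_iff
    (fun t => isometry_of_isometry_of_extends (hUV1 t) (isometry_of_mem_unitary (hU1 t))) hV1
    (fun t => isometry_of_isometry_of_extends (hUV2 t) (isometry_of_mem_unitary (hU2 t))) hV2
    (fun t s => comp_comm_of_comp_comm_of_extends (hUV1 t) (hUV2 s) (hU t s))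

end Extensions

/-- A commuting pair of C₀-semigroups of isometries is simultaneously doubly commuting
and dual doubly commuting iff `H = H_{p,u} ⊕ H_{u,p} ⊕ H_{u,u}` with the indicated
behaviour of the restrictions. -/
theorem doubly_and_dual_doubly_commuting_iff {G : Type} [NormedAddCommGroup G]
    [InnerProductSpace ℂ G] [CompleteSpace G] (K : Submodule ℂ G) [CompleteSpace ↥K]
    (V1 V2 : ℝ≥0 → ↥K →L[ℂ] ↥K)
    (h1 : IsIsometrySemigroup V1) (h2 : IsIsometrySemigroup V2) (hc : SgCommute V1 V2)
    (U1 U2 : ℝ → G →L[ℂ] G) (hext : IsMinimalUnitaryExtension K V1 V2 U1 U2) :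
    (SgDoublyCommute V1 V2 ∧ DualDoublyCommutes K U1 U2) ↔
    ∃ Hpu Hup Huu : Submodule ℂ ↥K,
      (IsClosed (Hpu : Set ↥K) ∧ IsClosed (Hup : Set ↥K) ∧ IsClosed (Huu : Set ↥K)) ∧
      (OrthoSubspaces Hpu Hup ∧ OrthoSubspaces Hpu Huu ∧ OrthoSubspaces Hup Huu) ∧
      Hpu ⊔ Hup ⊔ Huu = ⊤ ∧
      (ReducedBy V1 Hpu ∧ ReducedBy V2 Hpu ∧ ReducedBy V1 Hup ∧ ReducedBy V2 Hup ∧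
        ReducedBy V1 Huu ∧ ReducedBy V2 Huu) ∧
      (IsCnuOn V1 Hpu ∧ IsUnitarySemigroupOn V2 Hpu) ∧
      (IsUnitarySemigroupOn V1 Hup ∧ IsCnuOn V2 Hup) ∧
      (IsUnitarySemigroupOn V1 Huu ∧ IsUnitarySemigroupOn V2 Huu) := by
  obtain ⟨hU1, hU2, hU, hUV, -⟩ := hext
  exact doubly_and_dual_doubly_commuting_iff_general h1.1.2.1 h2.1.2.1
    (fun t => hU1.mem_unitary t) (fun t => hU2.mem_unitary t) (fun s t => hU s t)
    (fun t x => (hUV t x).1) (fun t x => (hUV t x).2)
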